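/- arXiv:1506.03430 — 2 statements merged into one kernel-verified Lean document; each statement's English description precedes it below -/
import Mathlib

section
/- Fix θ ∈ M and let A_1,…,A_k be the level sets of θ (the nonempty sets of the form {(i,j) : θ_{ij} = a} for real numbers a). Then the tangent cone of M at θ equals T_M(θ) = { v ∈ ℝ^{n1×n2} : for each l = 1,…,k, the restriction of v to A_l is isotonic on A_l }, where a restriction is isotonic on A_l if v_{ab} ≤ v_{cd} whenever (a,b), (c,d) ∈ A_l with a ≤ c and b ≤ d. In particular, if v is isotonic on every level set of θ then θ + α·v ∈ M for some α > 0. -/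
open MeasureTheory ProbabilityTheory

noncomputable section

/-- The set of isotonic (coordinatewise nondecreasing) `n1 × n2` matrices. -/
def Isotonic {n1 n2 : ℕ} (θ : Fin n1 → Fin n2 → ℝ) : Prop :=
  ∀ ⦃i k : Fin n1⦄ ⦃j l : Fin n2⦄, i ≤ k → j ≤ l → θ i j ≤ θ k l

/-- Squared Frobenius norm of a matrix. -/
def frobSq {n1 n2 : ℕ} (θ : Fin n1 → Fin n2 → ℝ) : ℝ :=
  ∑ i, ∑ j, θ i j ^ 2

/-- The tangent cone of the isotonic cone `M` at `θ`: the closure of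
`{α (u − θ) : α > 0, u ∈ M}`. -/
def tangentCone {n1 n2 : ℕ} (θ : Fin n1 → Fin n2 → ℝ) : Set (Fin n1 → Fin n2 → ℝ) :=
  closure {v | ∃ α : ℝ, 0 < α ∧ ∃ u, Isotonic u ∧ v = α • (u - θ)}

/-- `v` is isotonic on a subset `A` of indices. -/
def IsotonicOn {n1 n2 : ℕ} (v : Fin n1 → Fin n2 → ℝ) (A : Set (Fin n1 × Fin n2)) : Prop :=
  ∀ p ∈ A, ∀ q ∈ A, p.1 ≤ q.1 → p.2 ≤ q.2 → v p.1 p.2 ≤ v q.1 q.2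

open Filter Topology in
/-- If `v` is isotonic on every level set of an isotonic `θ`, then all sufficiently small
perturbations of `θ` in the direction `v` are isotonic. -/
theorem eventually_isotonic_add_smul {n1 n2 : ℕ} {θ v : Fin n1 → Fin n2 → ℝ}
    (hθ : Isotonic θ) (hv : ∀ a : ℝ, IsotonicOn v {p | θ p.1 p.2 = a}) :
    ∀ᶠ α : ℝ in 𝓝[>] 0, Isotonic (θ + α • v) := by
  simp only [Isotonic, eventually_all]
  intro i k j l hik hjl
  rcases (hθ hik hjl).eq_or_lt with h | h
  · filter_upwards [self_mem_nhdsWithin] with α hα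
    have hvle : v i j ≤ v k l := hv (θ k l) (i, j) h (k, l) rfl hik hjl
    have hmul := mul_le_mul_of_nonneg_left hvle (le_of_lt hα)
    simpa [h] using hmul
  · have hlim (i : Fin n1) (j : Fin n2) :
        Tendsto (fun α : ℝ => (θ + α • v) i j) (𝓝[>] 0) (𝓝 (θ i j)) := by
      have hcont : Continuous fun α : ℝ => (θ + α • v) i j := by
        simp only [Pi.add_apply, Pi.smul_apply]
        fun_prop
      simpa using (hcont.tendsto 0).mono_left nhdsWithin_le_nhds
    exact ((hlim i j).eventually_lt (hlim k l) h).mono fun _ => le_of_lt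

/-- The matrices that are isotonic on a given set of indices form a closed set. -/
theorem isClosed_setOf_isotonicOn {n1 n2 : ℕ} (A : Set (Fin n1 × Fin n2)) :
    IsClosed {v : Fin n1 → Fin n2 → ℝ | IsotonicOn v A} := by
  simp only [IsotonicOn, Set.ofPred_forall]
  refine isClosed_iInter fun p => isClosed_iInter fun _ => isClosed_iInter fun q =>
    isClosed_iInter fun _ => isClosed_iInter fun _ => isClosed_iInter fun _ => ?_
  exact isClosed_le (by fun_prop) (by fun_prop)

/-- **Remark after Lemma 4 (tangent cone at level sets).** For isotonic `θ`, the
tangent cone `T_M(θ)` equals the set of matrices `v` that are isotonic on every level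
set `{(i,j) : θ_{ij} = a}` of `θ`. In particular, if `v` is isotonic on every level
set of `θ` then `θ + α v` is isotonic for some `α > 0`. -/
theorem tangent_cone_eq_levelset_isotonic
    {n1 n2 : ℕ} (θ : Fin n1 → Fin n2 → ℝ) (hθ : Isotonic θ) :
    tangentCone θ =
      {v : Fin n1 → Fin n2 → ℝ | ∀ a : ℝ, IsotonicOn v {p | θ p.1 p.2 = a}} ∧
    ∀ v : Fin n1 → Fin n2 → ℝ, (∀ a : ℝ, IsotonicOn v {p | θ p.1 p.2 = a}) →
      ∃ α : ℝ, 0 < α ∧ Isotonic (θ + α • v) := by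
  have hsmall (v : Fin n1 → Fin n2 → ℝ) (hv : ∀ a : ℝ, IsotonicOn v {p | θ p.1 p.2 = a}) :
      ∃ α : ℝ, 0 < α ∧ Isotonic (θ + α • v) :=
    (eventually_mem_nhdsWithin.and (eventually_isotonic_add_smul hθ hv)).exists
  refine ⟨Set.Subset.antisymm ?_ ?_, hsmall⟩
  · refine closure_minimal ?_ ?_
    · rintro _ ⟨α, hα, u, hu, rfl⟩ a p hp q hq h₁ h₂
      have hp' : θ p.1 p.2 = a := hp
      have hq' : θ q.1 q.2 = a := hq
      have hmul := mul_le_mul_of_nonneg_left (sub_le_sub_right (hu h₁ h₂) a) hα.le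
      simpa [hp', hq'] using hmul
    · rw [Set.ofPred_forall]
      exact isClosed_iInter fun a => isClosed_setOf_isotonicOn _
  · intro v hv
    obtain ⟨α, hα, hiso⟩ := hsmall v hv
    refine subset_closure ⟨α⁻¹, inv_pos.2 hα, _, hiso, ?_⟩
    rw [add_sub_cancel_left, inv_smul_smul₀ hα.ne']
end
end

section
/- There exists a universal constant C > 0 such that the following holds for all integers n1, n2 > 1 with n = n1·n2 and all σ > 0. For every θ ∈ M and every rectangular partition π = (A_1,…,A_k) of {1,…,n1}×{1,…,n2} on which θ is constant, the expected squared norm of the projection of the Gaussian noise matrix onto the tangent cone satisfies E || Π(ε, T_M(θ)) ||² ≤ C·k·σ²·(log n)⁸, where the entries ε_{ij} are i.i.d. N(0,σ²). -/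
open MeasureTheory ProbabilityTheory

noncomputable section

/-- The law of an `n1 × n2` matrix with i.i.d. `N(0, σ²)` entries. -/
def noiseMeasure (n1 n2 : ℕ) (σ : ℝ) : Measure (Fin n1 → Fin n2 → ℝ) :=
  Measure.pi fun _ => Measure.pi fun _ => gaussianReal 0 ⟨σ ^ 2, sq_nonneg σ⟩

/-- `lse` is the least squares estimator: for every data matrix `y`, `lse y` minimizes
the squared Frobenius distance to `y` over the cone of isotonic matrices. -/
def IsLSE {n1 n2 : ℕ} (lse : (Fin n1 → Fin n2 → ℝ) → Fin n1 → Fin n2 → ℝ) : Prop :=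
  ∀ y, Isotonic (lse y) ∧ ∀ θ, Isotonic θ → frobSq (y - lse y) ≤ frobSq (y - θ)

/-- The risk `R(θ*, est) = E ‖est(θ* + ε) − θ*‖² / n`, where `ε` has i.i.d. `N(0,σ²)`
entries and `n = n1 n2`. -/
def risk {n1 n2 : ℕ} (σ : ℝ) (θstar : Fin n1 → Fin n2 → ℝ)
    (est : (Fin n1 → Fin n2 → ℝ) → Fin n1 → Fin n2 → ℝ) : ℝ :=
  (∫ ε, frobSq (est (θstar + ε) - θstar) ∂noiseMeasure n1 n2 σ) / (n1 * n2)

/-- The Euclidean (Frobenius) projection of `v` onto a set `K`: the point of `K`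
minimizing the squared Frobenius distance to `v` (when such a point exists and is
unique, `Classical.epsilon` returns it). -/
def projC {n1 n2 : ℕ} (K : Set (Fin n1 → Fin n2 → ℝ)) (v : Fin n1 → Fin n2 → ℝ) :
    Fin n1 → Fin n2 → ℝ :=
  Classical.epsilon fun p => p ∈ K ∧ ∀ u ∈ K, frobSq (v - p) ≤ frobSq (v - u)

/-- A rectangle `{(i,j) : k1 ≤ i ≤ l1, k2 ≤ j ≤ l2}` in `{1,…,n1} × {1,…,n2}`. -/
def IsRect {n1 n2 : ℕ} (A : Set (Fin n1 × Fin n2)) : Prop :=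
  ∃ (k1 l1 : Fin n1) (k2 l2 : Fin n2), k1 ≤ l1 ∧ k2 ≤ l2 ∧
    A = {p | k1 ≤ p.1 ∧ p.1 ≤ l1 ∧ k2 ≤ p.2 ∧ p.2 ≤ l2}

/-- A rectangular partition: pairwise disjoint rectangles covering the whole index set. -/
def IsRectPartition {n1 n2 : ℕ} (P : Finset (Set (Fin n1 × Fin n2))) : Prop :=
  (∀ A ∈ P, IsRect A) ∧
  (∀ A ∈ P, ∀ B ∈ P, A ≠ B → Disjoint A B) ∧
  (∀ p : Fin n1 × Fin n2, ∃ A ∈ P, p ∈ A)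

/-- `θ` is constant on each member of the partition `P`. -/
def ConstOnPartition {n1 n2 : ℕ} (θ : Fin n1 → Fin n2 → ℝ)
    (P : Finset (Set (Fin n1 × Fin n2))) : Prop :=
  ∀ A ∈ P, ∀ p ∈ A, ∀ q ∈ A, θ p.1 p.2 = θ q.1 q.2

/-- `k(θ)`: the smallest number of rectangles in a rectangular partition on which `θ`
is constant. -/
def kRect {n1 n2 : ℕ} (θ : Fin n1 → Fin n2 → ℝ) : ℕ :=
  sInf {k | ∃ P, IsRectPartition P ∧ ConstOnPartition θ P ∧ P.card = k}


theorem sum_sub_two_mul_div_two_le {g : ℕ → ℝ} (hg : Monotone g) (N : ℕ) :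
    ∑ u ∈ Finset.range N, (g u - g (2 * (u / 2))) ≤ g (N - 1) - g 0 := by
  induction N with
  | zero => simp
  | succ N ih =>
    rw [Finset.sum_range_succ]
    have h : g (N - 1) ≤ g (2 * (N / 2)) := hg (by omega)
    simp only [Nat.add_sub_cancel]
    linarith

theorem sum_range_mul_blocks (F : ℕ → ℝ) (N h : ℕ) :
    ∑ i ∈ Finset.range (N * h), F i =
      ∑ u ∈ Finset.range N, ∑ r ∈ Finset.range h, F (u * h + r) := by
  induction N with
  | zero => simp
  | succ N ih => rw [Finset.sum_range_succ, ← ih, Nat.succ_mul, Finset.sum_range_add]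

/-- The pairing of `w` with the approximation of `f` which is constant on `h × k` blocks and equals
`f` at the smallest corner of each block. -/
def blockPairing (w f : ℕ → ℕ → ℝ) (m n h k : ℕ) : ℝ :=
  ∑ i ∈ Finset.range m, ∑ j ∈ Finset.range n, w i j * f (h * (i / h)) (k * (j / k))

/-- The sum of `w` over the `h × k` block with indices `(u, v)`. -/
def blockSum (w : ℕ → ℕ → ℝ) (h k u v : ℕ) : ℝ :=
  ∑ i ∈ Finset.range h, ∑ j ∈ Finset.range k, w (u * h + i) (v * k + j)

theorem blockPairing_swap (w f : ℕ → ℕ → ℝ) (m n h k : ℕ) :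
    blockPairing (fun i j => w j i) (fun i j => f j i) n m k h = blockPairing w f m n h k := by
  unfold blockPairing
  rw [Finset.sum_comm]

theorem blockSum_swap (w : ℕ → ℕ → ℝ) (h k u v : ℕ) :
    blockSum (fun i j => w j i) k h v u = blockSum w h k u v := by
  unfold blockSum
  rw [Finset.sum_comm]

theorem sum_range_mul_range_mul (w c : ℕ → ℕ → ℝ) {N K h k : ℕ} (hh : 0 < h) (hk : 0 < k) :
    ∑ i ∈ Finset.range (N * h), ∑ j ∈ Finset.range (K * k), w i j * c (i / h) (j / k) =
      ∑ u ∈ Finset.range N, ∑ v ∈ Finset.range K, blockSum w h k u v * c u v := by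
  rw [sum_range_mul_blocks]
  refine Finset.sum_congr rfl fun u _ => ?_
  simp_rw [sum_range_mul_blocks _ K k, blockSum, Finset.sum_mul]
  rw [Finset.sum_comm]
  refine Finset.sum_congr rfl fun v _ => Finset.sum_congr rfl fun i hi =>
    Finset.sum_congr rfl fun j hj => ?_
  rw [Finset.mem_range] at hi hj
  rw [mul_comm u h, mul_comm v k, Nat.mul_add_div hh, Nat.mul_add_div hk,
    Nat.div_eq_of_lt hi, Nat.div_eq_of_lt hj, add_zero, add_zero]

/-- Halving the row size of the blocks changes the block pairing by at most the number of column
blocks times the oscillation of `f` times the largest block sum. -/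
theorem abs_blockPairing_sub_le {w f : ℕ → ℕ → ℝ} {N K h k : ℕ} {B D : ℝ} (hh : 0 < h)
    (hk : 0 < k) (hf : ∀ j, Monotone fun i => f i j) (hB : ∀ i j, |f i j| ≤ B)
    (hD0 : 0 ≤ D) (hD : ∀ u v, |blockSum w h k u v| ≤ D) :
    |blockPairing w f (N * h) (K * k) h k - blockPairing w f (N * h) (K * k) (2 * h) k| ≤
      K * (2 * B * D) := by
  have h1 : blockPairing w f (N * h) (K * k) h k = _ :=
    sum_range_mul_range_mul w (fun u v => f (h * u) (k * v)) hh hk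
  have h2 : blockPairing w f (N * h) (K * k) (2 * h) k =
      ∑ u ∈ Finset.range N, ∑ v ∈ Finset.range K,
        blockSum w h k u v * f (h * (2 * (u / 2))) (k * v) := by
    refine Eq.trans ?_ (sum_range_mul_range_mul w (fun u v => f (h * (2 * (u / 2))) (k * v)) hh hk)
    refine Finset.sum_congr rfl fun i _ => Finset.sum_congr rfl fun j _ => ?_
    rw [Nat.div_div_eq_div_mul, mul_comm h 2, mul_comm 2 h, mul_assoc]
  rw [h1, h2, ← Finset.sum_sub_distrib]
  simp_rw [← Finset.sum_sub_distrib, ← mul_sub]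
  rw [Finset.sum_comm]
  refine (Finset.abs_sum_le_sum_abs _ _).trans ?_
  have key : ∀ v ∈ Finset.range K, |∑ u ∈ Finset.range N, blockSum w h k u v *
      (f (h * u) (k * v) - f (h * (2 * (u / 2))) (k * v))| ≤ 2 * B * D := by
    intro v _
    have hg : Monotone fun u => f (h * u) (k * v) :=
      fun a b hab => hf _ (Nat.mul_le_mul_left h hab)
    calc _ ≤ ∑ u ∈ Finset.range N, D *
          (f (h * u) (k * v) - f (h * (2 * (u / 2))) (k * v)) := by
          refine (Finset.abs_sum_le_sum_abs _ _).trans (Finset.sum_le_sum fun u _ => ?_)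
          have h0 : 0 ≤ f (h * u) (k * v) - f (h * (2 * (u / 2))) (k * v) :=
            sub_nonneg.2 (hg (by omega : 2 * (u / 2) ≤ u))
          rw [abs_mul, abs_of_nonneg h0]
          exact mul_le_mul_of_nonneg_right (hD u v) h0
      _ ≤ D * (f (h * (N - 1)) (k * v) - f (h * 0) (k * v)) := by
          rw [← Finset.mul_sum]
          exact mul_le_mul_of_nonneg_left (sum_sub_two_mul_div_two_le hg N) hD0
      _ ≤ 2 * B * D := by
          have e1 := abs_le.1 (hB (h * (N - 1)) (k * v))
          have e2 := abs_le.1 (hB (h * 0) (k * v))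
          nlinarith [e1.2, e2.1]
  refine (Finset.sum_le_sum key).trans ?_
  simp

theorem two_pow_mul_sqrt_le {a b α β : ℕ} (h : β ≤ α) :
    (2 : ℝ) ^ β * √(2 ^ a * 2 ^ b) ≤ √(2 ^ (α + a) * 2 ^ (β + b)) := by
  refine Real.le_sqrt_of_sq_le ?_
  rw [mul_pow, Real.sq_sqrt (by positivity), ← pow_mul, ← pow_add, ← pow_add, ← pow_add]
  exact pow_le_pow_right₀ one_le_two (by omega)

/-- Row refinement along a dyadic scale, when there are at least as many row blocks as column
blocks. -/
theorem abs_blockPairing_dyadic_sub_le {w f : ℕ → ℕ → ℝ} {B M : ℝ} (hM0 : 0 ≤ M)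
    (hf : ∀ j, Monotone fun i => f i j) (hB : ∀ i j, |f i j| ≤ B)
    (hM : ∀ a b u v, |blockSum w (2 ^ a) (2 ^ b) u v| ≤ M * √(2 ^ a * 2 ^ b))
    {a b α β : ℕ} (h : β ≤ α) :
    |blockPairing w f (2 ^ (α + a)) (2 ^ (β + b)) (2 ^ a) (2 ^ b) -
      blockPairing w f (2 ^ (α + a)) (2 ^ (β + b)) (2 ^ (a + 1)) (2 ^ b)| ≤
      2 * B * M * √(2 ^ (α + a) * 2 ^ (β + b)) := by
  have h1 := abs_blockPairing_sub_le (N := 2 ^ α) (K := 2 ^ β) (pow_pos two_pos a)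
    (pow_pos two_pos b) hf hB (by positivity) (hM a b)
  rw [← pow_add, ← pow_add, ← pow_succ'] at h1
  have hB0 : 0 ≤ B := (abs_nonneg _).trans (hB 0 0)
  refine h1.trans ?_
  push_cast
  calc (2 : ℝ) ^ β * (2 * B * (M * √(2 ^ a * 2 ^ b)))
      = 2 * B * M * (2 ^ β * √(2 ^ a * 2 ^ b)) := by ring
    _ ≤ _ := mul_le_mul_of_nonneg_left (two_pow_mul_sqrt_le h) (by positivity)

theorem abs_blockPairing_row_step {w f : ℕ → ℕ → ℝ} {B M : ℝ} (hM0 : 0 ≤ M)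
    (hf : ∀ j, Monotone fun i => f i j) (hB : ∀ i j, |f i j| ≤ B)
    (hM : ∀ a b u v, |blockSum w (2 ^ a) (2 ^ b) u v| ≤ M * √(2 ^ a * 2 ^ b))
    {p q s t : ℕ} (hst : s ≤ t + 1) :
    |blockPairing w f (2 ^ p) (2 ^ q) (2 ^ (p - (t + 1))) (2 ^ (q - s)) -
      blockPairing w f (2 ^ p) (2 ^ q) (2 ^ (p - t)) (2 ^ (q - s))| ≤
      2 * B * M * √(2 ^ p * 2 ^ q) := by
  have hB0 : 0 ≤ B := (abs_nonneg _).trans (hB 0 0)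
  rcases le_or_gt p t with hpt | hpt
  · rw [Nat.sub_eq_zero_of_le hpt, Nat.sub_eq_zero_of_le (hpt.trans (Nat.le_succ t)), sub_self,
      abs_zero]
    positivity
  · have h1 := abs_blockPairing_dyadic_sub_le hM0 hf hB hM (a := p - (t + 1)) (b := q - s)
      (α := t + 1) (β := q - (q - s)) (by omega)
    rwa [show t + 1 + (p - (t + 1)) = p by omega, show q - (q - s) + (q - s) = q by omega,
      show p - (t + 1) + 1 = p - t by omega] at h1

/-- A bounded function, monotone in both variables, pairs with any array whose dyadic block sums
are controlled by the square root of the block area. -/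
theorem abs_sum_mul_le_of_blockSum_le {w f : ℕ → ℕ → ℝ} {B M : ℝ} (hM0 : 0 ≤ M)
    (hf1 : ∀ j, Monotone fun i => f i j) (hf2 : ∀ i, Monotone fun j => f i j)
    (hB : ∀ i j, |f i j| ≤ B)
    (hM : ∀ a b u v, |blockSum w (2 ^ a) (2 ^ b) u v| ≤ M * √(2 ^ a * 2 ^ b)) (p q : ℕ) :
    |∑ i ∈ Finset.range (2 ^ p), ∑ j ∈ Finset.range (2 ^ q), w i j * f i j| ≤
      (4 * (max p q : ℕ) + 1) * (B * M * √(2 ^ p * 2 ^ q)) := by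
  have hB0 : 0 ≤ B := (abs_nonneg _).trans (hB 0 0)
  set S := √((2 : ℝ) ^ p * 2 ^ q) with hS
  have hM' : ∀ a b u v, |blockSum (fun i j => w j i) (2 ^ a) (2 ^ b) u v| ≤
      M * √(2 ^ a * 2 ^ b) := fun a b u v => by
    rw [blockSum_swap, mul_comm ((2 : ℝ) ^ a)]
    exact hM b a v u
  have main : ∀ t : ℕ, |blockPairing w f (2 ^ p) (2 ^ q) (2 ^ (p - t)) (2 ^ (q - t))| ≤
      (4 * t + 1) * (B * M * S) := by
    intro t
    induction t with
    | zero =>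
      have h1 : blockPairing w f (2 ^ p) (2 ^ q) (2 ^ p) (2 ^ q) =
          blockSum w (2 ^ p) (2 ^ q) 0 0 * f 0 0 := by
        simp only [blockPairing, blockSum, Finset.sum_mul]
        refine Finset.sum_congr rfl fun i hi => Finset.sum_congr rfl fun j hj => ?_
        rw [Finset.mem_range] at hi hj
        simp [Nat.div_eq_of_lt hi, Nat.div_eq_of_lt hj]
      simp only [Nat.sub_zero, Nat.cast_zero, mul_zero, zero_add, one_mul]
      rw [h1, abs_mul]
      calc _ ≤ M * S * B := mul_le_mul (hM p q 0 0) (hB 0 0) (abs_nonneg _) (by positivity)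
        _ = _ := by ring
    | succ t ih =>
      have h1 := abs_blockPairing_row_step hM0 hf1 hB hM (p := p) (q := q) (s := t) (t := t)
        (by omega)
      have h2 := abs_blockPairing_row_step hM0 hf2 (fun i j => hB j i) hM' (p := q) (q := p)
        (s := t + 1) (t := t) (by omega)
      rw [blockPairing_swap w f, blockPairing_swap w f, mul_comm ((2 : ℝ) ^ q)] at h2
      rw [← hS] at h1 h2
      rw [abs_le] at *
      push_cast
      constructor <;> linarith [h1.1, h1.2, h2.1, h2.2, ih.1, ih.2]
  have h := main (max p q)
  rwa [Nat.sub_eq_zero_of_le (le_max_left p q), Nat.sub_eq_zero_of_le (le_max_right p q),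
    show blockPairing w f (2 ^ p) (2 ^ q) (2 ^ 0) (2 ^ 0) = _ by
      simp only [blockPairing, pow_zero, Nat.div_one, one_mul]; rfl] at h

theorem sum_range_ite_eq_sum_Ico (g : ℕ → ℝ) (s s' c n : ℕ) :
    ∑ i ∈ Finset.range n, (if s + (c + i) < s' then g (s + (c + i)) else 0) =
      ∑ i ∈ Finset.Ico (s + c) (min s' (s + c + n)), g i := by
  rw [Finset.sum_Ico_eq_sum_range, ← Finset.sum_filter]
  refine Finset.sum_congr ?_ fun i _ => by rw [add_assoc]
  ext i
  simp only [Finset.mem_filter, Finset.mem_range]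
  omega

/-- Version of `abs_sum_mul_le_of_blockSum_le` on a rectangle of size at most `2 ^ p × 2 ^ q`. -/
theorem abs_sum_Ico_mul_le {e f : ℕ → ℕ → ℝ} {B M : ℝ} (hM0 : 0 ≤ M)
    (hf1 : ∀ j, Monotone fun i => f i j) (hf2 : ∀ i, Monotone fun j => f i j)
    (hB : ∀ i j, |f i j| ≤ B)
    (hM : ∀ x y z t, |∑ i ∈ Finset.Ico x y, ∑ j ∈ Finset.Ico z t, e i j| ≤
      M * √((y - x : ℕ) * (t - z : ℕ)))
    {s s' t t' p q : ℕ} (hs : s' ≤ s + 2 ^ p) (ht : t' ≤ t + 2 ^ q) :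
    |∑ i ∈ Finset.Ico s s', ∑ j ∈ Finset.Ico t t', e i j * f i j| ≤
      (4 * (max p q : ℕ) + 1) * (B * M * √(2 ^ p * 2 ^ q)) := by
  set w : ℕ → ℕ → ℝ := fun i j =>
    if s + i < s' then (if t + j < t' then e (s + i) (t + j) else 0) else 0 with hw
  have hsum : ∀ (φ : ℕ → ℕ → ℝ) (m n c d : ℕ),
      ∑ i ∈ Finset.range m, ∑ j ∈ Finset.range n, w (c + i) (d + j) *
        φ (s + (c + i)) (t + (d + j)) =
      ∑ i ∈ Finset.Ico (s + c) (min s' (s + c + m)),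
        ∑ j ∈ Finset.Ico (t + d) (min t' (t + d + n)), e i j * φ i j := by
    intro φ m n c d
    rw [← sum_range_ite_eq_sum_Ico]
    refine Finset.sum_congr rfl fun i _ => ?_
    split_ifs with h
    · rw [← sum_range_ite_eq_sum_Ico]
      refine Finset.sum_congr rfl fun j _ => ?_
      simp only [hw, if_pos h, ite_mul, zero_mul]
    · simp [hw, h]
  have hblock : ∀ a b u v, |blockSum w (2 ^ a) (2 ^ b) u v| ≤ M * √(2 ^ a * 2 ^ b) := by
    intro a b u v
    have h1 := hsum (fun _ _ => 1) (2 ^ a) (2 ^ b) (u * 2 ^ a) (v * 2 ^ b)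
    simp only [mul_one] at h1
    rw [blockSum, h1]
    refine (hM _ _ _ _).trans (mul_le_mul_of_nonneg_left (Real.sqrt_le_sqrt ?_) hM0)
    have hlen : ∀ x y n : ℕ, min x (y + n) - y ≤ n := by omega
    exact_mod_cast Nat.mul_le_mul (hlen s' (s + u * 2 ^ a) (2 ^ a))
      (hlen t' (t + v * 2 ^ b) (2 ^ b))
  have h := abs_sum_mul_le_of_blockSum_le (f := fun i j => f (s + i) (t + j)) hM0
    (fun j a b hab => hf1 _ (Nat.add_le_add_left hab s))
    (fun i a b hab => hf2 _ (Nat.add_le_add_left hab t)) (fun i j => hB _ _) hblock p q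
  have h2 := hsum f (2 ^ p) (2 ^ q) 0 0
  simp only [zero_add, add_zero, min_eq_left hs, min_eq_left ht] at h2
  rwa [h2] at h

/-- Start of the piece of the interval `[k, l]` consisting of the points in the lower (`false`) or
upper (`true`) half whose distance to the complement lies in `[2 ^ a, 2 ^ (a + 1))`. -/
def pieceStart (k l : ℕ) (x : ℕ × Bool) : ℕ :=
  if x.2 then max ((k + l) / 2 + 1) (l + 2 - 2 ^ (x.1 + 1)) else k + 2 ^ x.1 - 1

/-- End (exclusive) of the piece described in `pieceStart`. -/
def pieceEnd (k l : ℕ) (x : ℕ × Bool) : ℕ :=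
  if x.2 then l + 2 - 2 ^ x.1 else min (k + 2 ^ (x.1 + 1) - 1) ((k + l) / 2 + 1)

theorem pieceEnd_le (k l : ℕ) (x : ℕ × Bool) :
    pieceEnd k l x ≤ pieceStart k l x + 2 ^ x.1 := by
  have := Nat.one_le_two_pow (n := x.1)
  unfold pieceStart pieceEnd
  rw [pow_succ]
  split_ifs <;> omega

theorem bounds_of_mem_piece {k l i : ℕ} {x : ℕ × Bool}
    (hi : i ∈ Finset.Ico (pieceStart k l x) (pieceEnd k l x)) :
    k ≤ i ∧ i ≤ l ∧ 2 ^ x.1 ≤ i + 1 - k ∧ 2 ^ x.1 ≤ l + 1 - i := by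
  have := Nat.one_le_two_pow (n := x.1)
  unfold pieceStart pieceEnd at hi
  rw [pow_succ, Finset.mem_Ico] at hi
  split_ifs at hi <;> omega

theorem sum_Ico_eq_sum_pieces (g : ℕ → ℝ) {k l L : ℕ} (hL : l + 1 - k < 2 ^ (L + 1)) :
    ∑ i ∈ Finset.Ico k (l + 1), g i =
      ∑ x ∈ Finset.range (L + 1) ×ˢ (Finset.univ : Finset Bool),
        ∑ i ∈ Finset.Ico (pieceStart k l x) (pieceEnd k l x), g i := by
  rw [← Finset.sum_fiberwise_of_maps_to (t := Finset.range (L + 1) ×ˢ (Finset.univ : Finset Bool))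
    (g := fun i => (Nat.log 2 (min (i + 1 - k) (l + 1 - i)), decide (k + l < 2 * i)))]
  · refine Finset.sum_congr rfl fun x _ => Finset.sum_congr ?_ fun _ _ => rfl
    ext i
    constructor
    · intro hi
      rw [Finset.mem_filter, Finset.mem_Ico] at hi
      obtain ⟨hi, rfl⟩ := hi
      have h0 : min (i + 1 - k) (l + 1 - i) ≠ 0 := by omega
      have h1 := Nat.pow_log_le_self 2 h0
      have h2 := Nat.lt_pow_succ_log_self one_lt_two (min (i + 1 - k) (l + 1 - i))
      rw [Finset.mem_Ico]
      unfold pieceStart pieceEnd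
      simp only [decide_eq_true_eq]
      rw [Nat.succ_eq_add_one, pow_succ] at h2
      rw [pow_succ]
      split_ifs <;> omega
    · intro hi
      have h1 := bounds_of_mem_piece hi
      have h0 : min (i + 1 - k) (l + 1 - i) ≠ 0 := by omega
      rw [Finset.mem_filter, Finset.mem_Ico]
      refine ⟨by omega, Prod.ext ?_ ?_⟩
      · rw [Nat.log_eq_iff (Or.inr ⟨one_lt_two, h0⟩)]
        unfold pieceStart pieceEnd at hi
        rw [Finset.mem_Ico] at hi
        rw [pow_succ] at hi ⊢
        split_ifs at hi <;> omega
      · unfold pieceStart pieceEnd at hi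
        rw [Finset.mem_Ico] at hi
        rcases x with ⟨a, b⟩
        cases b
        · simp at hi ⊢; omega
        · simp at hi ⊢; omega
  · intro i hi
    rw [Finset.mem_Ico] at hi
    simp only [Finset.mem_product, Finset.mem_range, Finset.mem_univ, and_true]
    exact Nat.log_lt_of_lt_pow (by omega) (by omega)

theorem mul_sq_le_sum_sq {f : ℕ → ℕ → ℝ} {k1 l1 k2 l2 : ℕ}
    (hf : ∀ ⦃i k j l⦄, k1 ≤ i → i ≤ k → k ≤ l1 → k2 ≤ j → j ≤ l → l ≤ l2 → f i j ≤ f k l)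
    {i j m n : ℕ} (hi : k1 ≤ i ∧ i ≤ l1 ∧ m ≤ i + 1 - k1 ∧ m ≤ l1 + 1 - i)
    (hj : k2 ≤ j ∧ j ≤ l2 ∧ n ≤ j + 1 - k2 ∧ n ≤ l2 + 1 - j) :
    (m * n : ℝ) * f i j ^ 2 ≤
      ∑ i ∈ Finset.Ico k1 (l1 + 1), ∑ j ∈ Finset.Ico k2 (l2 + 1), f i j ^ 2 := by
  have key : ∀ s s' t t', k1 ≤ s → s' ≤ l1 + 1 → k2 ≤ t → t' ≤ l2 + 1 → m ≤ s' - s →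
      n ≤ t' - t → (∀ x ∈ Finset.Ico s s', ∀ y ∈ Finset.Ico t t', f i j ^ 2 ≤ f x y ^ 2) →
      (m * n : ℝ) * f i j ^ 2 ≤
        ∑ i ∈ Finset.Ico k1 (l1 + 1), ∑ j ∈ Finset.Ico k2 (l2 + 1), f i j ^ 2 := by
    intro s s' t t' hs hs' ht ht' hm hn h
    calc (m * n : ℝ) * f i j ^ 2 ≤ ((s' - s : ℕ) * (t' - t : ℕ) : ℝ) * f i j ^ 2 := by gcongr
      _ = ∑ x ∈ Finset.Ico s s', ∑ y ∈ Finset.Ico t t', f i j ^ 2 := by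
          simp [mul_assoc]
      _ ≤ ∑ x ∈ Finset.Ico s s', ∑ y ∈ Finset.Ico t t', f x y ^ 2 :=
          Finset.sum_le_sum fun x hx => Finset.sum_le_sum fun y hy => h x hx y hy
      _ ≤ ∑ x ∈ Finset.Ico s s', ∑ y ∈ Finset.Ico k2 (l2 + 1), f x y ^ 2 :=
          Finset.sum_le_sum fun x _ => Finset.sum_le_sum_of_subset_of_nonneg
            (Finset.Ico_subset_Ico ht ht') fun _ _ _ => sq_nonneg _
      _ ≤ _ := Finset.sum_le_sum_of_subset_of_nonneg (Finset.Ico_subset_Ico hs hs')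
          fun _ _ _ => Finset.sum_nonneg fun _ _ => sq_nonneg _
  rcases le_total 0 (f i j) with h0 | h0
  · refine key i (l1 + 1) j (l2 + 1) (by omega) (by omega) (by omega) (by omega) (by omega)
      (by omega) fun x hx y hy => ?_
    rw [Finset.mem_Ico] at hx hy
    have := hf (i := i) (k := x) (j := j) (l := y) (by omega) (by omega) (by omega) (by omega)
      (by omega) (by omega)
    exact pow_le_pow_left₀ h0 this 2
  · refine key k1 (i + 1) k2 (j + 1) (by omega) (by omega) (by omega) (by omega) (by omega)
      (by omega) fun x hx y hy => ?_
    rw [Finset.mem_Ico] at hx hy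
    have := hf (i := x) (k := i) (j := y) (l := j) (by omega) (by omega) (by omega) (by omega)
      (by omega) (by omega)
    nlinarith

/-- An array which is isotonic on a rectangle pairs with any array having small rectangle sums, up
to a polylogarithmic factor. -/
theorem abs_sum_rect_mul_le {e f : ℕ → ℕ → ℝ} {M : ℝ} (hM0 : 0 ≤ M)
    (hM : ∀ x y z t, |∑ i ∈ Finset.Ico x y, ∑ j ∈ Finset.Ico z t, e i j| ≤
      M * √((y - x : ℕ) * (t - z : ℕ))) {k1 l1 k2 l2 L : ℕ}
    (hk1 : k1 ≤ l1) (hk2 : k2 ≤ l2)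
    (hf : ∀ ⦃i k j l⦄, k1 ≤ i → i ≤ k → k ≤ l1 → k2 ≤ j → j ≤ l → l ≤ l2 → f i j ≤ f k l)
    (hL1 : l1 + 1 - k1 < 2 ^ (L + 1)) (hL2 : l2 + 1 - k2 < 2 ^ (L + 1)) :
    |∑ i ∈ Finset.Ico k1 (l1 + 1), ∑ j ∈ Finset.Ico k2 (l2 + 1), e i j * f i j| ≤
      16 * (L + 1 : ℝ) ^ 3 * M *
        √(∑ i ∈ Finset.Ico k1 (l1 + 1), ∑ j ∈ Finset.Ico k2 (l2 + 1), f i j ^ 2) := by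
  set V := ∑ i ∈ Finset.Ico k1 (l1 + 1), ∑ j ∈ Finset.Ico k2 (l2 + 1), f i j ^ 2 with hV
  have hpiece : ∀ x ∈ Finset.range (L + 1) ×ˢ (Finset.univ : Finset Bool),
      ∀ y ∈ Finset.range (L + 1) ×ˢ (Finset.univ : Finset Bool),
      |∑ i ∈ Finset.Ico (pieceStart k1 l1 x) (pieceEnd k1 l1 x),
        ∑ j ∈ Finset.Ico (pieceStart k2 l2 y) (pieceEnd k2 l2 y), e i j * f i j| ≤
      4 * (L + 1 : ℝ) * (M * √V) := by
    intro x hx y hy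
    set B := √(V / (2 ^ x.1 * 2 ^ y.1)) with hB
    set g : ℕ → ℕ → ℝ := fun i j =>
      max (-B) (min B (f (max k1 (min i l1)) (max k2 (min j l2)))) with hg
    have hB0 : 0 ≤ B := Real.sqrt_nonneg _
    have hgf : ∀ i ∈ Finset.Ico (pieceStart k1 l1 x) (pieceEnd k1 l1 x),
        ∀ j ∈ Finset.Ico (pieceStart k2 l2 y) (pieceEnd k2 l2 y), g i j = f i j := by
      intro i hi j hj
      have hi := bounds_of_mem_piece hi
      have hj := bounds_of_mem_piece hj
      have h1 := mul_sq_le_sum_sq hf hi hj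
      push_cast at h1
      have h2 : |f i j| ≤ B := Real.abs_le_sqrt (by rw [le_div_iff₀ (by positivity)]; linarith)
      rw [abs_le] at h2
      simp only [hg]
      rw [min_eq_left hi.2.1, max_eq_right hi.1, min_eq_left hj.2.1, max_eq_right hj.1,
        min_eq_right h2.2, max_eq_right h2.1]
    have h := abs_sum_Ico_mul_le (e := e) (f := g) (B := B) hM0
      (fun j a b hab => max_le_max_left _ (min_le_min_left _
        (hf (by omega) (by omega) (by omega) (by omega) (by omega) (by omega))))
      (fun i a b hab => max_le_max_left _ (min_le_min_left _
        (hf (by omega) (by omega) (by omega) (by omega) (by omega) (by omega))))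
      (fun i j => abs_le.2 ⟨le_max_left _ _, max_le (by linarith) (min_le_left _ _)⟩) hM
      (pieceEnd_le k1 l1 x) (pieceEnd_le k2 l2 y)
    have hBS : B * √(2 ^ x.1 * 2 ^ y.1) = √V := by
      rw [hB, ← Real.sqrt_mul' _ (by positivity), div_mul_cancel₀ _ (by positivity)]
    rw [Finset.sum_congr rfl fun i hi => Finset.sum_congr rfl fun j hj => by
      rw [hgf i hi j hj], mul_right_comm, hBS, mul_comm (√V)] at h
    refine h.trans (mul_le_mul_of_nonneg_right ?_ (by positivity))
    simp only [Finset.mem_product, Finset.mem_range, Finset.mem_univ, and_true] at hx hy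
    have : ((max x.1 y.1 : ℕ) : ℝ) ≤ L := by exact_mod_cast (by omega : max x.1 y.1 ≤ L)
    linarith
  have hdecomp : ∑ i ∈ Finset.Ico k1 (l1 + 1), ∑ j ∈ Finset.Ico k2 (l2 + 1), e i j * f i j =
      ∑ x ∈ Finset.range (L + 1) ×ˢ (Finset.univ : Finset Bool),
      ∑ y ∈ Finset.range (L + 1) ×ˢ (Finset.univ : Finset Bool),
      ∑ i ∈ Finset.Ico (pieceStart k1 l1 x) (pieceEnd k1 l1 x),
        ∑ j ∈ Finset.Ico (pieceStart k2 l2 y) (pieceEnd k2 l2 y), e i j * f i j := by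
    rw [sum_Ico_eq_sum_pieces _ hL1]
    refine Finset.sum_congr rfl fun x _ => ?_
    exact (Finset.sum_congr rfl fun i _ => sum_Ico_eq_sum_pieces _ hL2).trans Finset.sum_comm
  rw [hdecomp]
  calc _ ≤ ∑ x ∈ Finset.range (L + 1) ×ˢ (Finset.univ : Finset Bool),
      ∑ y ∈ Finset.range (L + 1) ×ˢ (Finset.univ : Finset Bool), 4 * (L + 1 : ℝ) * (M * √V) := by
        refine (Finset.abs_sum_le_sum_abs _ _).trans (Finset.sum_le_sum fun x hx => ?_)
        exact (Finset.abs_sum_le_sum_abs _ _).trans (Finset.sum_le_sum fun y hy => hpiece x hx y hy)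
    _ = _ := by
        simp
        ring

/-- Extension of a matrix by zero to all pairs of natural numbers. -/
def zeroExt {n1 n2 : ℕ} (v : Fin n1 → Fin n2 → ℝ) (i j : ℕ) : ℝ :=
  if h : i < n1 ∧ j < n2 then v ⟨i, h.1⟩ ⟨j, h.2⟩ else 0

theorem zeroExt_coe {n1 n2 : ℕ} (v : Fin n1 → Fin n2 → ℝ) (i : Fin n1) (j : Fin n2) :
    zeroExt v i j = v i j := by
  simp [zeroExt]

theorem zeroExt_of_not {n1 n2 : ℕ} (v : Fin n1 → Fin n2 → ℝ) {i j : ℕ} (h : ¬(i < n1 ∧ j < n2)) :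
    zeroExt v i j = 0 :=
  dif_neg h

theorem sum_Ico_eq_sum_fin {n : ℕ} {F : ℕ → ℝ} (hF : ∀ i, n ≤ i → F i = 0) (x y : ℕ) :
    ∑ i ∈ Finset.Ico x y, F i = ∑ i : Fin n, if x ≤ (i : ℕ) ∧ (i : ℕ) < y then F i else 0 := by
  rw [Fin.sum_univ_eq_sum_range (fun i => if x ≤ i ∧ i < y then F i else 0), ← Finset.sum_filter]
  symm
  refine Finset.sum_subset (fun i hi => ?_) fun i hi hi' => hF i ?_
  · simp only [Finset.mem_filter, Finset.mem_Ico] at hi ⊢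
    omega
  · simp only [Finset.mem_filter, Finset.mem_Ico, Finset.mem_range] at hi hi'
    omega

theorem sum_rect_eq_sum_fin {n1 n2 : ℕ} {F : ℕ → ℕ → ℝ}
    (hF : ∀ i j, ¬(i < n1 ∧ j < n2) → F i j = 0) (x y z t : ℕ) :
    ∑ i ∈ Finset.Ico x y, ∑ j ∈ Finset.Ico z t, F i j =
      ∑ i : Fin n1, ∑ j : Fin n2,
        if (x ≤ (i : ℕ) ∧ (i : ℕ) < y) ∧ z ≤ (j : ℕ) ∧ (j : ℕ) < t then F i j else 0 := by
  rw [sum_Ico_eq_sum_fin (n := n1) fun i hi => Finset.sum_eq_zero fun j _ => hF i j (by omega)]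
  refine Finset.sum_congr rfl fun i _ => ?_
  rw [sum_Ico_eq_sum_fin (n := n2) fun j hj => hF i j (by omega)]
  split_ifs with h
  · simp [h]
  · simp [h]

theorem noiseMeasure_eq (n1 n2 : ℕ) (σ : ℝ) : ∃ v : NNReal, (v : ℝ) = σ ^ 2 ∧
    noiseMeasure n1 n2 σ = Measure.pi fun _ => Measure.pi fun _ => gaussianReal 0 v :=
  ⟨⟨σ ^ 2, sq_nonneg σ⟩, rfl, rfl⟩

instance isProbabilityMeasure_noiseMeasure (n1 n2 : ℕ) (σ : ℝ) :
    IsProbabilityMeasure (noiseMeasure n1 n2 σ) := by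
  obtain ⟨v, -, h⟩ := noiseMeasure_eq n1 n2 σ
  rw [h]
  infer_instance

theorem exp_linear_eq_prod {n1 n2 : ℕ} (a : Fin n1 → Fin n2 → ℝ) (c : ℝ)
    (ε : Fin n1 → Fin n2 → ℝ) :
    Real.exp (c * ∑ i, ∑ j, a i j * ε i j) = ∏ i, ∏ j, Real.exp (c * a i j * ε i j) := by
  simp_rw [← Real.exp_sum, Finset.mul_sum, mul_assoc]

theorem integrable_exp_linear {n1 n2 : ℕ} (σ : ℝ) (a : Fin n1 → Fin n2 → ℝ) (c : ℝ) :
    Integrable (fun ε => Real.exp (c * ∑ i, ∑ j, a i j * ε i j)) (noiseMeasure n1 n2 σ) := by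
  obtain ⟨v, -, h⟩ := noiseMeasure_eq n1 n2 σ
  simp_rw [exp_linear_eq_prod, h]
  exact Integrable.fintype_prod (f := fun i (x : Fin n2 → ℝ) => ∏ j, Real.exp (c * a i j * x j))
    fun i => Integrable.fintype_prod (f := fun j (x : ℝ) => Real.exp (c * a i j * x))
      fun j => integrable_exp_mul_gaussianReal _

theorem integral_exp_linear {n1 n2 : ℕ} (σ : ℝ) (a : Fin n1 → Fin n2 → ℝ) (c : ℝ) :
    ∫ ε, Real.exp (c * ∑ i, ∑ j, a i j * ε i j) ∂noiseMeasure n1 n2 σ =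
      Real.exp (c ^ 2 * σ ^ 2 / 2 * ∑ i, ∑ j, a i j ^ 2) := by
  obtain ⟨v, hv, h⟩ := noiseMeasure_eq n1 n2 σ
  have h1 : ∀ i j, ∫ x, Real.exp (c * a i j * x) ∂gaussianReal 0 v =
      Real.exp (c ^ 2 * σ ^ 2 / 2 * a i j ^ 2) := by
    intro i j
    have := congrFun (mgf_id_gaussianReal (μ := 0) (v := v)) (c * a i j)
    simp only [mgf, id] at this
    rw [this, hv]
    congr 1
    ring
  simp_rw [exp_linear_eq_prod, h]
  rw [integral_fintype_prod_eq_prod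
    (f := fun i (x : Fin n2 → ℝ) => ∏ j, Real.exp (c * a i j * x j))]
  rw [Finset.prod_congr rfl fun i _ => integral_fintype_prod_eq_prod
    (f := fun j (x : ℝ) => Real.exp (c * a i j * x))]
  simp_rw [h1, ← Real.exp_sum, Finset.mul_sum]

theorem sq_le_two_mul_sq_add_exp (ℓ x : ℝ) :
    x ^ 2 ≤ 2 * ℓ ^ 2 + 2 * ((Real.exp (2 * x) + Real.exp (-2 * x)) * Real.exp (-2 * ℓ)) := by
  have h1 : |x| ≤ ℓ + Real.exp (|x| - ℓ) := by linarith [Real.add_one_le_exp (|x| - ℓ)]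
  have h2 : x ^ 2 ≤ 2 * ℓ ^ 2 + 2 * Real.exp (|x| - ℓ) ^ 2 := by
    rw [← sq_abs]
    nlinarith [abs_nonneg x, Real.exp_pos (|x| - ℓ), sq_nonneg (ℓ - Real.exp (|x| - ℓ))]
  have h3 : Real.exp (|x| - ℓ) ^ 2 = Real.exp (2 * |x|) * Real.exp (-2 * ℓ) := by
    rw [← Real.exp_nat_mul, ← Real.exp_add]
    congr 1
    push_cast
    ring
  have h4 : Real.exp (2 * |x|) ≤ Real.exp (2 * x) + Real.exp (-2 * x) := by
    rcases abs_cases x with h | h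
    · rw [h.1]
      linarith [Real.exp_pos (-2 * x)]
    · rw [h.1, mul_neg, ← neg_mul]
      linarith [Real.exp_pos (2 * x)]
  rw [h3] at h2
  nlinarith [mul_le_mul_of_nonneg_right h4 (Real.exp_pos (-2 * ℓ)).le]

/-- Indices of the rectangles of an `n1 × n2` grid: pairs of endpoints in both directions. -/
abbrev RectIndex (n1 n2 : ℕ) : Type :=
  (Fin (n1 + 1) × Fin (n1 + 1)) × Fin (n2 + 1) × Fin (n2 + 1)

/-- The area of the rectangle with index `r`. -/
def rectArea {n1 n2 : ℕ} (r : RectIndex n1 n2) : ℝ :=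
  ((r.1.2 - r.1.1 : ℕ) : ℝ) * ((r.2.2 - r.2.1 : ℕ) : ℝ)

/-- Coefficients of the normalized sum over the rectangle with index `r`. -/
def rectCoeff {n1 n2 : ℕ} (σ : ℝ) (r : RectIndex n1 n2) (i : Fin n1) (j : Fin n2) : ℝ :=
  if ((r.1.1 : ℕ) ≤ i ∧ (i : ℕ) < r.1.2) ∧ (r.2.1 : ℕ) ≤ j ∧ (j : ℕ) < r.2.2 then
    (σ * √(rectArea r))⁻¹ else 0

/-- A random variable dominating the squares of all normalized rectangle sums. -/
def rectMajorant {n1 n2 : ℕ} (σ ℓ : ℝ) (ε : Fin n1 → Fin n2 → ℝ) : ℝ :=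
  2 * ℓ ^ 2 + 2 * ∑ r : RectIndex n1 n2,
    (Real.exp (2 * ∑ i, ∑ j, rectCoeff σ r i j * ε i j) +
      Real.exp (-2 * ∑ i, ∑ j, rectCoeff σ r i j * ε i j)) * Real.exp (-2 * ℓ)

theorem rectMajorant_nonneg {n1 n2 : ℕ} (σ ℓ : ℝ) (ε : Fin n1 → Fin n2 → ℝ) :
    0 ≤ rectMajorant σ ℓ ε := by
  unfold rectMajorant
  positivity

theorem sq_rectCoeff_sum_le {n1 n2 : ℕ} (σ ℓ : ℝ) (ε : Fin n1 → Fin n2 → ℝ)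
    (r : RectIndex n1 n2) :
    (∑ i, ∑ j, rectCoeff σ r i j * ε i j) ^ 2 ≤ rectMajorant σ ℓ ε := by
  refine (sq_le_two_mul_sq_add_exp ℓ _).trans ?_
  unfold rectMajorant
  gcongr
  exact Finset.single_le_sum (f := fun r : RectIndex n1 n2 =>
    (Real.exp (2 * ∑ i, ∑ j, rectCoeff σ r i j * ε i j) +
      Real.exp (-2 * ∑ i, ∑ j, rectCoeff σ r i j * ε i j)) * Real.exp (-2 * ℓ))
    (fun _ _ => by positivity) (Finset.mem_univ r)

theorem abs_sum_rect_le_of_index {n1 n2 : ℕ} {σ : ℝ} (hσ : 0 < σ) (ℓ : ℝ)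
    (ε : Fin n1 → Fin n2 → ℝ) (r : RectIndex n1 n2) :
    |∑ i ∈ Finset.Ico (r.1.1 : ℕ) r.1.2, ∑ j ∈ Finset.Ico (r.2.1 : ℕ) r.2.2, zeroExt ε i j| ≤
      σ * √(rectMajorant σ ℓ ε) * √(rectArea r) := by
  have h0 : 0 ≤ rectArea r := by unfold rectArea; positivity
  rcases h0.eq_or_lt with h0 | h0
  · have : (r.1.2 - r.1.1 : ℕ) = 0 ∨ (r.2.2 - r.2.1 : ℕ) = 0 := by
      simpa [rectArea] using h0.symm
    rcases this with h | h
    · rw [Finset.Ico_eq_empty (by omega : ¬ (r.1.1 : ℕ) < r.1.2)]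
      simp only [Finset.sum_empty, abs_zero]
      positivity
    · rw [Finset.Ico_eq_empty (by omega : ¬ (r.2.1 : ℕ) < r.2.2)]
      simp only [Finset.sum_empty, Finset.sum_const_zero, abs_zero]
      positivity
  · have h1 : ∑ i ∈ Finset.Ico (r.1.1 : ℕ) r.1.2, ∑ j ∈ Finset.Ico (r.2.1 : ℕ) r.2.2,
        zeroExt ε i j = σ * √(rectArea r) * ∑ i, ∑ j, rectCoeff σ r i j * ε i j := by
      have h2 : σ * √(rectArea r) ≠ 0 := by positivity
      rw [sum_rect_eq_sum_fin (fun i j h => zeroExt_of_not ε h)]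
      simp_rw [Finset.mul_sum, zeroExt_coe]
      refine Finset.sum_congr rfl fun i _ => Finset.sum_congr rfl fun j _ => ?_
      unfold rectCoeff
      split_ifs
      · rw [mul_inv_cancel_left₀ h2]
      · simp
    rw [h1, abs_mul, abs_of_pos (by positivity), mul_right_comm]
    exact mul_le_mul_of_nonneg_right (mul_le_mul_of_nonneg_left
      (Real.abs_le_sqrt (sq_rectCoeff_sum_le σ ℓ ε r)) hσ.le) (by positivity)

theorem abs_sum_rect_le {n1 n2 : ℕ} {σ : ℝ} (hσ : 0 < σ) (ℓ : ℝ)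
    (ε : Fin n1 → Fin n2 → ℝ) (x y z t : ℕ) :
    |∑ i ∈ Finset.Ico x y, ∑ j ∈ Finset.Ico z t, zeroExt ε i j| ≤
      σ * √(rectMajorant σ ℓ ε) * √((y - x : ℕ) * (t - z : ℕ)) := by
  have h1 := abs_sum_rect_le_of_index hσ ℓ ε
    ((⟨min x n1, by omega⟩, ⟨min y n1, by omega⟩), ⟨min z n2, by omega⟩, ⟨min t n2, by omega⟩)
  have h2 : ∑ i ∈ Finset.Ico x y, ∑ j ∈ Finset.Ico z t, zeroExt ε i j =
      ∑ i ∈ Finset.Ico (min x n1) (min y n1), ∑ j ∈ Finset.Ico (min z n2) (min t n2),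
        zeroExt ε i j := by
    rw [sum_rect_eq_sum_fin (fun i j h => zeroExt_of_not ε h),
      sum_rect_eq_sum_fin (fun i j h => zeroExt_of_not ε h)]
    refine Finset.sum_congr rfl fun i _ => Finset.sum_congr rfl fun j _ => ?_
    have hi := i.2
    have hj := j.2
    exact if_congr (by omega) rfl rfl
  rw [h2]
  refine h1.trans (mul_le_mul_of_nonneg_left (Real.sqrt_le_sqrt ?_) (by positivity))
  unfold rectArea
  exact_mod_cast Nat.mul_le_mul (by omega : min y n1 - min x n1 ≤ y - x)
    (by omega : min t n2 - min z n2 ≤ t - z)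

theorem sum_sq_rectCoeff_le {n1 n2 : ℕ} {σ : ℝ} (hσ : 0 < σ) (r : RectIndex n1 n2) :
    σ ^ 2 * ∑ i, ∑ j, rectCoeff σ r i j ^ 2 ≤ 1 := by
  have h0 : 0 ≤ rectArea r := by unfold rectArea; positivity
  have h1 : ∑ i, ∑ j, rectCoeff σ r i j ^ 2 = rectArea r * ((σ * √(rectArea r))⁻¹) ^ 2 := by
    have h2 := sum_rect_eq_sum_fin (n1 := n1) (n2 := n2)
      (F := fun i j => if i < n1 ∧ j < n2 then ((σ * √(rectArea r))⁻¹) ^ 2 else 0)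
      (fun i j h => if_neg h) r.1.1 r.1.2 r.2.1 r.2.2
    have h3 : ∑ i ∈ Finset.Ico (r.1.1 : ℕ) r.1.2, ∑ j ∈ Finset.Ico (r.2.1 : ℕ) r.2.2,
        (if i < n1 ∧ j < n2 then ((σ * √(rectArea r))⁻¹) ^ 2 else 0) =
        ∑ i ∈ Finset.Ico (r.1.1 : ℕ) r.1.2, ∑ j ∈ Finset.Ico (r.2.1 : ℕ) r.2.2,
          ((σ * √(rectArea r))⁻¹) ^ 2 := by
      refine Finset.sum_congr rfl fun i hi => Finset.sum_congr rfl fun j hj => if_pos ?_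
      rw [Finset.mem_Ico] at hi hj
      omega
    rw [h3] at h2
    simp only [Finset.sum_const, Nat.card_Ico, nsmul_eq_mul] at h2
    rw [rectArea, mul_assoc]
    refine Eq.trans ?_ h2.symm
    refine Finset.sum_congr rfl fun i _ => Finset.sum_congr rfl fun j _ => ?_
    unfold rectCoeff
    split_ifs <;> simp_all
  rw [h1, inv_pow, mul_pow, Real.sq_sqrt h0]
  rcases h0.eq_or_lt with h0 | h0
  · simp [← h0]
  · field_simp
    exact le_refl _

theorem integrable_rectMajorant {n1 n2 : ℕ} (σ ℓ : ℝ) :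
    Integrable (rectMajorant σ ℓ) (noiseMeasure n1 n2 σ) := by
  refine (integrable_const _).add (Integrable.const_mul (integrable_finsetSum _ fun r _ => ?_) _)
  exact ((integrable_exp_linear σ _ _).add (integrable_exp_linear σ _ _)).mul_const _

theorem integral_rectMajorant_le {n1 n2 : ℕ} {σ : ℝ} (hσ : 0 < σ) (ℓ : ℝ) :
    ∫ ε, rectMajorant σ ℓ ε ∂noiseMeasure n1 n2 σ ≤
      2 * ℓ ^ 2 + 4 * ((n1 + 1) ^ 2 * (n2 + 1) ^ 2 * Real.exp 2 * Real.exp (-2 * ℓ)) := by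
  have hint : ∀ r : RectIndex n1 n2, Integrable (fun ε =>
      (Real.exp (2 * ∑ i, ∑ j, rectCoeff σ r i j * ε i j) +
        Real.exp (-2 * ∑ i, ∑ j, rectCoeff σ r i j * ε i j)) * Real.exp (-2 * ℓ))
      (noiseMeasure n1 n2 σ) := fun r =>
    ((integrable_exp_linear σ _ _).add (integrable_exp_linear σ _ _)).mul_const _
  have hr : ∀ r : RectIndex n1 n2, ∫ ε, (Real.exp (2 * ∑ i, ∑ j, rectCoeff σ r i j * ε i j) +
        Real.exp (-2 * ∑ i, ∑ j, rectCoeff σ r i j * ε i j)) * Real.exp (-2 * ℓ)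
      ∂noiseMeasure n1 n2 σ ≤ 2 * (Real.exp 2 * Real.exp (-2 * ℓ)) := by
    intro r
    rw [integral_mul_const, integral_add (integrable_exp_linear σ _ _)
      (integrable_exp_linear σ _ _), integral_exp_linear, integral_exp_linear]
    have h1 := sum_sq_rectCoeff_le hσ r
    have h2 : Real.exp ((2 : ℝ) ^ 2 * σ ^ 2 / 2 * ∑ i, ∑ j, rectCoeff σ r i j ^ 2) ≤
        Real.exp 2 := Real.exp_le_exp.2 (by linarith)
    have h3 : Real.exp ((-2 : ℝ) ^ 2 * σ ^ 2 / 2 * ∑ i, ∑ j, rectCoeff σ r i j ^ 2) ≤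
        Real.exp 2 := Real.exp_le_exp.2 (by linarith)
    nlinarith [Real.exp_pos (-2 * ℓ)]
  unfold rectMajorant
  rw [integral_add (integrable_const _) (Integrable.const_mul
    (integrable_finsetSum _ fun r _ => hint r) _), integral_const_mul 2 (fun ε => ∑ r, _),
    integral_finsetSum _ fun r _ => hint r]
  have h4 := Finset.sum_le_sum fun r (_ : r ∈ (Finset.univ : Finset (RectIndex n1 n2))) => hr r
  rw [Finset.sum_const, Finset.card_univ, nsmul_eq_mul] at h4
  simp only [Fintype.card_prod, Fintype.card_fin] at h4
  push_cast at h4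
  simp only [integral_const, probReal_univ, one_smul]
  nlinarith

theorem exists_projection {n1 n2 : ℕ} {K : Set (Fin n1 → Fin n2 → ℝ)} (hK : IsClosed K)
    (hne : K.Nonempty) (v : Fin n1 → Fin n2 → ℝ) :
    ∃ p ∈ K, ∀ u ∈ K, frobSq (v - p) ≤ frobSq (v - u) := by
  obtain ⟨u0, hu0⟩ := hne
  have hcont : Continuous fun u : Fin n1 → Fin n2 → ℝ => frobSq (v - u) := by
    unfold frobSq
    simp only [Pi.sub_apply]
    fun_prop
  set S := K ∩ {u | frobSq (v - u) ≤ frobSq (v - u0)} with hS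
  have hSc : IsCompact S := by
    refine (isCompact_closedBall v √(frobSq (v - u0))).of_isClosed_subset
      (hK.inter (isClosed_le hcont continuous_const)) fun u hu => ?_
    rw [Metric.mem_closedBall, dist_pi_le_iff (Real.sqrt_nonneg _)]
    intro i
    rw [dist_pi_le_iff (Real.sqrt_nonneg _)]
    intro j
    rw [dist_comm, Real.dist_eq]
    refine Real.abs_le_sqrt (le_trans ?_ hu.2)
    calc (v i j - u i j) ^ 2 ≤ ∑ j, (v - u) i j ^ 2 :=
          Finset.single_le_sum (f := fun j => (v - u) i j ^ 2) (fun _ _ => sq_nonneg _)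
            (Finset.mem_univ j)
      _ ≤ frobSq (v - u) :=
          Finset.single_le_sum (f := fun i => ∑ j, (v - u) i j ^ 2)
            (fun _ _ => Finset.sum_nonneg fun _ _ => sq_nonneg _) (Finset.mem_univ i)
  obtain ⟨p, hp, hmin⟩ := hSc.exists_isMinOn ⟨u0, hu0, le_refl (frobSq (v - u0))⟩ hcont.continuousOn
  refine ⟨p, hp.1, fun u hu => ?_⟩
  rcases le_total (frobSq (v - u)) (frobSq (v - u0)) with h | h
  · exact hmin ⟨hu, h⟩
  · exact hp.2.trans h

theorem frobSq_nonneg {n1 n2 : ℕ} (v : Fin n1 → Fin n2 → ℝ) : 0 ≤ frobSq v :=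
  Finset.sum_nonneg fun _ _ => Finset.sum_nonneg fun _ _ => sq_nonneg _

theorem frobSq_sub_smul {n1 n2 : ℕ} (v p : Fin n1 → Fin n2 → ℝ) (t : ℝ) :
    frobSq (v - t • p) = frobSq v - 2 * t * ∑ i, ∑ j, v i j * p i j + t ^ 2 * frobSq p := by
  simp only [frobSq, Finset.mul_sum, ← Finset.sum_sub_distrib, ← Finset.sum_add_distrib,
    Pi.sub_apply, Pi.smul_apply, smul_eq_mul]
  refine Finset.sum_congr rfl fun i _ => Finset.sum_congr rfl fun j _ => ?_
  ring

/-- A minimizer of the distance to `v` over a set stable under positive scaling satisfies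
`‖p‖² ≤ ⟨v, p⟩`. -/
theorem frobSq_le_of_minimizer {n1 n2 : ℕ} {v p : Fin n1 → Fin n2 → ℝ}
    (h : ∀ t : ℝ, 0 < t → frobSq (v - p) ≤ frobSq (v - t • p)) :
    frobSq p ≤ ∑ i, ∑ j, v i j * p i j := by
  set c := ∑ i, ∑ j, v i j * p i j with hc
  have hq : ∀ t : ℝ, 0 < t → 0 ≤ (t - 1) * ((t + 1) * frobSq p - 2 * c) := by
    intro t ht
    have h1 := h t ht
    have h2 := frobSq_sub_smul v p 1
    rw [one_smul] at h2
    rw [frobSq_sub_smul, h2] at h1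
    linarith
  by_contra! hlt
  have hs := frobSq_nonneg p
  rcases le_or_gt c 0 with h0 | h0
  · have := hq (1 / 2) (by norm_num)
    linarith
  · have hs' : 0 < frobSq p := h0.trans hlt
    have h1 := hq (c / frobSq p) (by positivity)
    rw [add_mul, div_mul_cancel₀ _ hs'.ne'] at h1
    have h2 : c / frobSq p < 1 := (div_lt_one hs').2 hlt
    nlinarith

theorem smul_mem_tangentCone {n1 n2 : ℕ} {θ p : Fin n1 → Fin n2 → ℝ} (hp : p ∈ tangentCone θ)
    {t : ℝ} (ht : 0 < t) : t • p ∈ tangentCone θ := by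
  refine map_mem_closure (continuous_const_smul t) hp ?_
  rintro _ ⟨α, hα, u, hu, rfl⟩
  exact ⟨t * α, mul_pos ht hα, u, hu, smul_smul t α _⟩

theorem le_of_mem_tangentCone {n1 n2 : ℕ} {θ p : Fin n1 → Fin n2 → ℝ} (hp : p ∈ tangentCone θ)
    {i k : Fin n1} {j l : Fin n2} (hik : i ≤ k) (hjl : j ≤ l) (hθ : θ i j = θ k l) :
    p i j ≤ p k l := by
  have hcl : IsClosed {q : Fin n1 → Fin n2 → ℝ | q i j ≤ q k l} :=
    isClosed_le (by fun_prop) (by fun_prop)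
  refine closure_minimal ?_ hcl hp
  rintro _ ⟨α, hα, u, hu, rfl⟩
  simp only [Set.mem_ofPred_eq, Pi.smul_apply, Pi.sub_apply, smul_eq_mul, hθ]
  exact mul_le_mul_of_nonneg_left (sub_le_sub_right (hu hik hjl) _) hα.le

open Classical in
theorem sum_eq_sum_partition {n1 n2 : ℕ} {P : Finset (Set (Fin n1 × Fin n2))}
    (hP : IsRectPartition P) (F : Fin n1 → Fin n2 → ℝ) :
    ∑ i, ∑ j, F i j = ∑ A ∈ P, ∑ i, ∑ j, if (i, j) ∈ A then F i j else 0 := by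
  rw [Finset.sum_comm (s := P)]
  refine Finset.sum_congr rfl fun i _ => ?_
  rw [Finset.sum_comm (s := P)]
  refine Finset.sum_congr rfl fun j _ => ?_
  obtain ⟨A, hA, hm⟩ := hP.2.2 (i, j)
  rw [Finset.sum_eq_single_of_mem A hA fun B hB hBA =>
    if_neg fun hmB => Set.disjoint_left.1 (hP.2.1 B hB A hA hBA) hmB hm, if_pos hm]

open Classical in
theorem sum_isRect_mul_le {n1 n2 : ℕ} {ε p : Fin n1 → Fin n2 → ℝ} {M : ℝ} (hM0 : 0 ≤ M)
    (hM : ∀ x y z t, |∑ i ∈ Finset.Ico x y, ∑ j ∈ Finset.Ico z t, zeroExt ε i j| ≤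
      M * √((y - x : ℕ) * (t - z : ℕ))) {A : Set (Fin n1 × Fin n2)} (hA : IsRect A)
    (hp : ∀ ⦃i k j l⦄, (i, j) ∈ A → (k, l) ∈ A → i ≤ k → j ≤ l → p i j ≤ p k l)
    {L : ℕ} (hL1 : n1 < 2 ^ (L + 1)) (hL2 : n2 < 2 ^ (L + 1)) :
    (∑ i, ∑ j, if (i, j) ∈ A then ε i j * p i j else 0) ≤
      16 * (L + 1 : ℝ) ^ 3 * M * √(∑ i, ∑ j, if (i, j) ∈ A then p i j ^ 2 else 0) := by
  obtain ⟨k1, l1, k2, l2, h1, h2, hA⟩ := hA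
  have hmem : ∀ i j, (i, j) ∈ A ↔ k1 ≤ i ∧ i ≤ l1 ∧ k2 ≤ j ∧ j ≤ l2 := fun i j => by
    rw [hA]
    rfl
  have hsum : ∀ F : ℕ → ℕ → ℝ, (∀ i j, ¬(i < n1 ∧ j < n2) → F i j = 0) →
      ∑ i ∈ Finset.Ico (k1 : ℕ) (l1 + 1), ∑ j ∈ Finset.Ico (k2 : ℕ) (l2 + 1), F i j =
      ∑ i : Fin n1, ∑ j : Fin n2, if (i, j) ∈ A then F i j else 0 := by
    intro F hF
    rw [sum_rect_eq_sum_fin hF]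
    refine Finset.sum_congr rfl fun i _ => Finset.sum_congr rfl fun j _ => if_congr ?_ rfl rfl
    simp only [hmem, Fin.le_def, Nat.lt_succ_iff]
    tauto
  have e1 := hsum (fun i j => zeroExt ε i j * zeroExt p i j) fun i j h => by
    simp [zeroExt_of_not ε h]
  have e2 := hsum (fun i j => zeroExt p i j ^ 2) fun i j h => by
    simp [zeroExt_of_not p h]
  simp only [zeroExt_coe] at e1 e2
  rw [← e1, ← e2]
  have hk1 := k1.2
  have hk2 := k2.2
  have hl1 := l1.2
  have hl2 := l2.2
  refine (le_abs_self _).trans (abs_sum_rect_mul_le hM0 hM h1 h2 ?_ (by omega) (by omega))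
  intro i k j l a1 a2 a3 a4 a5 a6
  have hi : i < n1 := by omega
  have hk : k < n1 := by omega
  have hj : j < n2 := by omega
  have hl : l < n2 := by omega
  have := hp (i := ⟨i, hi⟩) (k := ⟨k, hk⟩) (j := ⟨j, hj⟩) (l := ⟨l, hl⟩)
    (by simp only [hmem, Fin.le_def]; omega)
    (by simp only [hmem, Fin.le_def]; omega) a2 a5
  rwa [← zeroExt_coe p, ← zeroExt_coe p] at this

/-- Deterministic bound on the projection onto the tangent cone in terms of rectangle sums. -/
theorem frobSq_projC_le {n1 n2 : ℕ} {θ ε : Fin n1 → Fin n2 → ℝ} (hθ : Isotonic θ)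
    {P : Finset (Set (Fin n1 × Fin n2))} (hP : IsRectPartition P) (hθP : ConstOnPartition θ P)
    {M : ℝ} (hM0 : 0 ≤ M)
    (hM : ∀ x y z t, |∑ i ∈ Finset.Ico x y, ∑ j ∈ Finset.Ico z t, zeroExt ε i j| ≤
      M * √((y - x : ℕ) * (t - z : ℕ)))
    {L : ℕ} (hL1 : n1 < 2 ^ (L + 1)) (hL2 : n2 < 2 ^ (L + 1)) :
    frobSq (projC (tangentCone θ) ε) ≤ P.card * (16 * (L + 1 : ℝ) ^ 3 * M) ^ 2 := by
  classical
  have hne : (tangentCone θ).Nonempty := ⟨_, subset_closure ⟨1, one_pos, θ, hθ, rfl⟩⟩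
  obtain ⟨hpK, hpmin⟩ := Classical.epsilon_spec (exists_projection isClosed_closure hne ε)
  change projC (tangentCone θ) ε ∈ tangentCone θ at hpK
  change ∀ u ∈ tangentCone θ, frobSq (ε - projC (tangentCone θ) ε) ≤ frobSq (ε - u) at hpmin
  set p := projC (tangentCone θ) ε
  set c := 16 * (L + 1 : ℝ) ^ 3 * M with hc
  have hc0 : 0 ≤ c := by positivity
  have h1 : frobSq p ≤ ∑ i, ∑ j, ε i j * p i j :=
    frobSq_le_of_minimizer fun t ht => hpmin _ (smul_mem_tangentCone hpK ht)
  set V : Set (Fin n1 × Fin n2) → ℝ := fun A => ∑ i, ∑ j, if (i, j) ∈ A then p i j ^ 2 else 0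
    with hV
  have hV0 : ∀ A, 0 ≤ V A := fun A => Finset.sum_nonneg fun i _ => Finset.sum_nonneg fun j _ => by
    split_ifs <;> positivity
  have hVsum : frobSq p = ∑ A ∈ P, V A := sum_eq_sum_partition hP _
  have h2 : ∑ i, ∑ j, ε i j * p i j ≤ c * ∑ A ∈ P, √(V A) := by
    rw [sum_eq_sum_partition hP, Finset.mul_sum]
    refine Finset.sum_le_sum fun A hA => sum_isRect_mul_le hM0 hM (hP.1 A hA) ?_ hL1 hL2
    intro i k j l hij hkl hik hjl
    exact le_of_mem_tangentCone hpK hik hjl (hθP A hA (i, j) hij (k, l) hkl)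
  have h3 : (∑ A ∈ P, √(V A)) ^ 2 ≤ P.card * frobSq p := by
    refine sq_sum_le_card_mul_sum_sq.trans (le_of_eq ?_)
    rw [hVsum, Finset.sum_congr rfl fun A _ => Real.sq_sqrt (hV0 A)]
  have hs := frobSq_nonneg p
  rcases hs.eq_or_lt with h0 | h0
  · rw [← h0]
    exact mul_nonneg (Nat.cast_nonneg _) (sq_nonneg _)
  · have h4 : frobSq p ^ 2 ≤ c ^ 2 * (P.card * frobSq p) := by
      calc frobSq p ^ 2 ≤ (c * ∑ A ∈ P, √(V A)) ^ 2 := pow_le_pow_left₀ hs (h1.trans h2) 2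
        _ = c ^ 2 * (∑ A ∈ P, √(V A)) ^ 2 := mul_pow _ _ _
        _ ≤ _ := mul_le_mul_of_nonneg_left h3 (sq_nonneg c)
    refine le_of_mul_le_mul_right ?_ h0
    linarith

theorem integral_rectMajorant_log_le {n1 n2 : ℕ} (h1 : 1 < n1) (h2 : 1 < n2) {σ : ℝ}
    (hσ : 0 < σ) (hlog : 1 ≤ Real.log (n1 * n2)) :
    ∫ ε, rectMajorant σ (Real.log (n1 * n2)) ε ∂noiseMeasure n1 n2 σ ≤
      200 * Real.log (n1 * n2) ^ 2 := by
  have e1 : (2 : ℝ) ≤ n1 := by exact_mod_cast h1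
  have e2 : (2 : ℝ) ≤ n2 := by exact_mod_cast h2
  have hn : (0 : ℝ) < n1 * n2 := by positivity
  have hexp : Real.exp (-2 * Real.log (n1 * n2)) = ((n1 * n2 : ℝ) ^ 2)⁻¹ := by
    rw [neg_mul, Real.exp_neg, mul_comm, Real.exp_mul, Real.exp_log hn]
    norm_cast
  have he : Real.exp 2 ≤ 8 := by
    rw [show (2 : ℝ) = 1 + 1 by norm_num, Real.exp_add]
    nlinarith [Real.exp_one_lt_d9, Real.exp_pos 1]
  have hN : ((n1 : ℝ) + 1) ^ 2 * (n2 + 1) ^ 2 ≤ 6 * (n1 * n2 : ℝ) ^ 2 := by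
    calc ((n1 : ℝ) + 1) ^ 2 * (n2 + 1) ^ 2 ≤ (3 / 2 * n1) ^ 2 * (3 / 2 * n2) ^ 2 := by
          gcongr <;> linarith
      _ ≤ 6 * (n1 * n2 : ℝ) ^ 2 := by nlinarith [sq_nonneg ((n1 : ℝ) * n2)]
  have hprod : ((n1 : ℝ) + 1) ^ 2 * (n2 + 1) ^ 2 * Real.exp 2 * ((n1 * n2 : ℝ) ^ 2)⁻¹ ≤ 48 := by
    rw [← div_eq_mul_inv, div_le_iff₀ (by positivity)]
    calc ((n1 : ℝ) + 1) ^ 2 * (n2 + 1) ^ 2 * Real.exp 2 ≤ 6 * (n1 * n2 : ℝ) ^ 2 * 8 := by gcongr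
      _ = _ := by ring
  have h := integral_rectMajorant_le (n1 := n1) (n2 := n2) hσ (Real.log (n1 * n2))
  rw [hexp] at h
  nlinarith

theorem natLog_add_one_le {n : ℕ} (hn : n ≠ 0) (hlog : 1 ≤ Real.log n) :
    (Nat.log 2 n + 1 : ℝ) ≤ 3 * Real.log n := by
  have h1 : ((2 : ℝ) ^ Nat.log 2 n) ≤ n := by exact_mod_cast Nat.pow_log_le_self 2 hn
  have h2 := Real.log_le_log (by positivity) h1
  rw [Real.log_pow] at h2
  nlinarith [Real.log_two_gt_d9, (Nat.cast_nonneg (Nat.log 2 n) : (0 : ℝ) ≤ _)]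

/-- **Inequality (fofo.1) (projection of Gaussian noise onto tangent cones).** There
is a universal constant `C > 0` such that for all `n1, n2 > 1`, `σ > 0`, every
isotonic `θ` and every rectangular partition `P` (with `k = |P|` rectangles) on which
`θ` is constant, `E‖Π(ε, T_M(θ))‖² ≤ C k σ² (log n)⁸` with `n = n1 n2`, where `ε` has
i.i.d. `N(0,σ²)` entries. -/
theorem gaussian_projection_tangent_cone_bound :
    ∃ C : ℝ, 0 < C ∧
      ∀ (n1 n2 : ℕ), 1 < n1 → 1 < n2 → ∀ σ : ℝ, 0 < σ →
        ∀ θ : Fin n1 → Fin n2 → ℝ, Isotonic θ →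
          ∀ P : Finset (Set (Fin n1 × Fin n2)), IsRectPartition P →
            ConstOnPartition θ P →
            (∫ ε, frobSq (projC (tangentCone θ) ε) ∂noiseMeasure n1 n2 σ) ≤
              C * P.card * σ ^ 2 * Real.log (n1 * n2) ^ 8 := by
  refine ⟨432 ^ 2 * 200, by norm_num, fun n1 n2 h1 h2 σ hσ θ hθ P hP hθP => ?_⟩
  have e1 : (2 : ℝ) ≤ n1 := by exact_mod_cast h1
  have e2 : (2 : ℝ) ≤ n2 := by exact_mod_cast h2
  have hlog : 1 ≤ Real.log (n1 * n2) := by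
    have h4 : Real.log (2 ^ 2) ≤ Real.log (n1 * n2) :=
      Real.log_le_log (by norm_num) (by nlinarith)
    rw [Real.log_pow] at h4
    push_cast at h4
    linarith [Real.log_two_gt_d9]
  set ℓ := Real.log (n1 * n2) with hℓ
  set L := Nat.log 2 (n1 * n2) with hL
  have hLle : (L + 1 : ℝ) ≤ 3 * ℓ := by
    have h := natLog_add_one_le (n := n1 * n2) (by positivity) (by push_cast; exact hlog)
    rwa [Nat.cast_mul] at h
  have hlt : n1 * n2 < 2 ^ (L + 1) := Nat.lt_pow_succ_log_self one_lt_two _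
  have hL1 : n1 < 2 ^ (L + 1) := by nlinarith
  have hL2 : n2 < 2 ^ (L + 1) := by nlinarith
  have hpt : ∀ ε, frobSq (projC (tangentCone θ) ε) ≤
      P.card * (432 * ℓ ^ 3) ^ 2 * σ ^ 2 * rectMajorant σ ℓ ε := by
    intro ε
    have h := frobSq_projC_le hθ hP hθP (by positivity) (abs_sum_rect_le hσ ℓ ε) hL1 hL2
    have hM := rectMajorant_nonneg σ ℓ ε
    calc _ ≤ _ := h
      _ = P.card * (16 * (L + 1 : ℝ) ^ 3) ^ 2 * σ ^ 2 * rectMajorant σ ℓ ε := by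
          rw [mul_pow _ (σ * _), mul_pow σ, Real.sq_sqrt hM]
          ring
      _ ≤ P.card * (16 * (3 * ℓ) ^ 3) ^ 2 * σ ^ 2 * rectMajorant σ ℓ ε := by gcongr
      _ = _ := by ring
  calc _ ≤ ∫ ε, P.card * (432 * ℓ ^ 3) ^ 2 * σ ^ 2 * rectMajorant σ ℓ ε ∂noiseMeasure n1 n2 σ :=
        integral_mono_of_nonneg (Filter.Eventually.of_forall fun ε => frobSq_nonneg _)
          ((integrable_rectMajorant σ ℓ).const_mul _) (Filter.Eventually.of_forall hpt)
    _ = P.card * (432 * ℓ ^ 3) ^ 2 * σ ^ 2 *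
          ∫ ε, rectMajorant σ ℓ ε ∂noiseMeasure n1 n2 σ := integral_const_mul _ _
    _ ≤ P.card * (432 * ℓ ^ 3) ^ 2 * σ ^ 2 * (200 * ℓ ^ 2) :=
        mul_le_mul_of_nonneg_left (integral_rectMajorant_log_le h1 h2 hσ hlog) (by positivity)
    _ = _ := by ring
end
end
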